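/- Let f be a one-hidden-layer network of width n with smooth activation σ such that σ and all its derivatives are polynomially bounded. For fixed inputs x_1, x_2, x_3, x_4 ∈ ℝ^{d_0}, consider C = E_θ[ Σ_{μ,ν} (∂²f(x_1)/∂θ_μ∂θ_ν)(∂f(x_2)/∂θ_μ)(∂f(x_3)/∂θ_ν) f(x_4) ], where μ, ν each run over all parameter entries. Then there exists a constant K, independent of n, such that |C| ≤ K / n for all n ≥ 1. -/

import Mathlib

open MeasureTheory ProbabilityTheory

namespace OneHiddenLayer

/-- Parameter index type for a one-hidden-layer network of width `n` on inputs in `ℝ^{d0}`: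
the input weight vectors `w_i` (`Fin n × Fin d0`) and the readout weights `v_i` (`Fin n`). -/
abbrev Param (d0 n : ℕ) : Type := (Fin n × Fin d0) ⊕ Fin n

/-- The one-hidden-layer network `f(x) = n^{-1/2} Σ_i v_i σ(d0^{-1/2} w_i ⬝ x)`. -/
noncomputable def net (σ : ℝ → ℝ) (d0 n : ℕ) (θ : Param d0 n → ℝ) (x : Fin d0 → ℝ) : ℝ :=
  (Real.sqrt (n : ℝ))⁻¹ * ∑ i : Fin n, θ (.inr i) *
    σ ((Real.sqrt (d0 : ℝ))⁻¹ * ∑ j : Fin d0, θ (.inl (i, j)) * x j)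

/-- All parameters are i.i.d. standard Gaussians. -/
noncomputable def gaussParam (d0 n : ℕ) : Measure (Param d0 n → ℝ) :=
  Measure.pi fun _ => gaussianReal 0 1

/-- A single standard Gaussian vector `w ∼ N(0, I_{d0})`. -/
noncomputable def gaussVec (d0 : ℕ) : Measure (Fin d0 → ℝ) :=
  Measure.pi fun _ => gaussianReal 0 1

/-- The neural tangent kernel `Θ(x,x') = Σ_μ ∂f(x)/∂θ_μ ⬝ ∂f(x')/∂θ_μ`. -/
noncomputable def NTK (σ : ℝ → ℝ) (d0 n : ℕ) (θ : Param d0 n → ℝ) (x x' : Fin d0 → ℝ) : ℝ :=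
  ∑ μ : Param d0 n,
    fderiv ℝ (fun θ' => net σ d0 n θ' x) θ (Pi.single μ 1) *
    fderiv ℝ (fun θ' => net σ d0 n θ' x') θ (Pi.single μ 1)

/-- The correlation function
`C = E_θ[ Σ_{μ,ν} ∂²f(x₁)/∂θ_μ∂θ_ν ⬝ ∂f(x₂)/∂θ_μ ⬝ ∂f(x₃)/∂θ_ν ⬝ f(x₄) ]`. -/
noncomputable def corrDTheta (σ : ℝ → ℝ) (d0 n : ℕ) (x₁ x₂ x₃ x₄ : Fin d0 → ℝ) : ℝ :=
  ∫ θ, (∑ μ : Param d0 n, ∑ ν : Param d0 n,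
      iteratedFDeriv ℝ 2 (fun θ' => net σ d0 n θ' x₁) θ ![Pi.single μ 1, Pi.single ν 1] *
        fderiv ℝ (fun θ' => net σ d0 n θ' x₂) θ (Pi.single μ 1) *
        fderiv ℝ (fun θ' => net σ d0 n θ' x₃) θ (Pi.single ν 1) *
        net σ d0 n θ x₄) ∂(gaussParam d0 n)


lemma temperate_integrable (d0 n : ℕ) {F : (Param d0 n → ℝ) → ℝ} (hF : F.HasTemperateGrowth) :
    Integrable F (gaussParam d0 n) := by
  obtain ⟨k, C, h⟩ := hF.2 0
  have hpr : IsProbabilityMeasure (gaussParam d0 n) := by unfold gaussParam; infer_instance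
  have hco : ∀ μ : Param d0 n, MemLp (fun θ : Param d0 n → ℝ => ‖θ μ‖) (k : ENNReal)
      (gaussParam d0 n) := fun μ =>
    ((memLp_id_gaussianReal' (μ := 0) (v := 1) (k : ENNReal) (by simp)).comp_measurePreserving
      (measurePreserving_eval (fun _ : Param d0 n => gaussianReal 0 1) μ)).norm
  have hsum : MemLp (fun θ : Param d0 n → ℝ => ∑ μ, ‖θ μ‖) (k : ENNReal) (gaussParam d0 n) :=
    memLp_finsetSum _ fun μ _ => hco μ
  have hm : MemLp (fun θ : Param d0 n → ℝ => 1 + ∑ μ, ‖θ μ‖) (k : ENNReal) (gaussParam d0 n) :=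
    (memLp_const (1 : ℝ)).add hsum
  have hle : ∀ θ : Param d0 n → ℝ, ‖θ‖ ≤ ∑ μ, ‖θ μ‖ := fun θ =>
    (pi_norm_le_iff_of_nonneg (Finset.sum_nonneg fun _ _ => norm_nonneg _)).2 fun μ =>
      Finset.single_le_sum (f := fun μ => ‖θ μ‖) (fun _ _ => norm_nonneg _) (Finset.mem_univ μ)
  have h1 : Integrable (fun θ : Param d0 n → ℝ => (1 + ∑ μ, ‖θ μ‖) ^ k) (gaussParam d0 n) := by
    refine (hm.integrable_norm_pow' (f := fun θ : Param d0 n → ℝ => 1 + ∑ μ, ‖θ μ‖)).congr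
      (.of_forall fun θ => ?_)
    simp only
    rw [Real.norm_of_nonneg (by positivity)]
  have hC : 0 ≤ C := by
    have := (norm_nonneg _).trans (h 0)
    simpa using this
  refine (h1.const_mul C).mono' hF.1.continuous.aestronglyMeasurable (.of_forall fun θ => ?_)
  have h0 : ‖F θ‖ ≤ C * (1 + ‖θ‖) ^ k := by simpa using h θ
  refine h0.trans ?_
  have := hle θ
  gcongr

/-- embedding of the block of the `i`-th neuron. -/
def blk (d0 n : ℕ) (i : Fin n) : Param d0 1 → Param d0 n :=
  Sum.map (fun p => (i, p.2)) (fun _ => i)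

lemma blk_inj (d0 n : ℕ) (i : Fin n) : Function.Injective (blk d0 n i) := by
  rintro (⟨a, b⟩ | a) (⟨c, d⟩ | c) h <;> simp [blk] at h ⊢
  · exact ⟨Subsingleton.elim _ _, h⟩
  · exact Subsingleton.elim _ _

/-- Reindexing of the parameters by neuron. -/
def blkEquiv (d0 n : ℕ) : Fin n × Param d0 1 ≃ Param d0 n where
  toFun p := blk d0 n p.1 p.2
  invFun := Sum.elim (fun p => (p.1, .inl (0, p.2))) (fun i => (i, .inr 0))
  left_inv := by
    rintro ⟨i, (⟨a, b⟩ | a)⟩ <;> simp [blk] <;> exact Subsingleton.elim _ _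
  right_inv := by
    rintro (⟨a, b⟩ | a) <;> simp [blk]

/-- restriction to the `i`-th block -/
noncomputable def res (d0 n : ℕ) (i : Fin n) : (Param d0 n → ℝ) →L[ℝ] (Param d0 1 → ℝ) :=
  ContinuousLinearMap.pi fun p => ContinuousLinearMap.proj (blk d0 n i p)

lemma res_apply (d0 n : ℕ) (i : Fin n) (θ : Param d0 n → ℝ) (p : Param d0 1) :
    res d0 n i θ p = θ (blk d0 n i p) := rfl

lemma res_single (d0 n : ℕ) (i k : Fin n) (p : Param d0 1) :
    res d0 n i (Pi.single (blk d0 n k p) 1) = if k = i then Pi.single p 1 else 0 := by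
  ext q
  rw [res_apply]
  have : blk d0 n i q = blk d0 n k p ↔ (i, q) = (k, p) := (blkEquiv d0 n).injective.eq_iff (a := (i,q)) (b := (k,p))
  split_ifs with h
  · subst h
    simp [Pi.single_apply, (blk_inj d0 n k).eq_iff]
  · simp [this, Ne.symm h]

lemma res_mp (d0 n : ℕ) (i : Fin n) :
    MeasurePreserving (res d0 n i) (gaussParam d0 n) (gaussParam d0 1) := by
  refine ⟨(res d0 n i).continuous.measurable, ?_⟩
  have h1 : iIndepFun (fun (p : Param d0 n) (θ : Param d0 n → ℝ) => θ p) (gaussParam d0 n) :=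
    iIndepFun_pi (X := fun _ x => x) (fun _ => aemeasurable_id)
  have h2 := h1.precomp (blk_inj d0 n i)
  have : IsProbabilityMeasure (gaussParam d0 n) := by unfold gaussParam; infer_instance
  rw [iIndepFun_iff_map_fun_eq_pi_map (fun p => (measurable_pi_apply _).aemeasurable)] at h2
  refine Eq.trans h2 ?_
  unfold gaussParam
  congr 1
  ext1 p
  exact (measurePreserving_eval (fun _ : Param d0 n => gaussianReal 0 1) _).map_eq

lemma net_eq (σ : ℝ → ℝ) (d0 n : ℕ) (x : Fin d0 → ℝ) (θ : Param d0 n → ℝ) :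
    net σ d0 n θ x = (Real.sqrt n)⁻¹ * ∑ i, net σ d0 1 (res d0 n i θ) x := by
  simp [net, res_apply, blk]

lemma net_temperate (σ : ℝ → ℝ) (hσ : σ.HasTemperateGrowth) (d0 n : ℕ) (x : Fin d0 → ℝ) :
    (fun θ => net σ d0 n θ x).HasTemperateGrowth := by
  have hp : ∀ μ : Param d0 n, (fun θ : Param d0 n → ℝ => θ μ).HasTemperateGrowth := fun μ =>
    (ContinuousLinearMap.proj (R := ℝ) (φ := fun _ : Param d0 n => ℝ) μ).hasTemperateGrowth
  unfold net
  refine (Function.HasTemperateGrowth.const _).mul (.sum fun i _ => (hp _).mul (hσ.comp ?_))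
  refine (Function.HasTemperateGrowth.const _).mul (.sum fun i _ => (hp _).mul (.const _))

lemma fderiv_temperate {E F : Type*} [NormedAddCommGroup E] [NormedSpace ℝ E]
    [NormedAddCommGroup F] [NormedSpace ℝ F] {f : E → F} (hf : f.HasTemperateGrowth) (v : E) :
    (fun x => fderiv ℝ f x v).HasTemperateGrowth := by
  have h : (fderiv ℝ f).HasTemperateGrowth := by
    refine ⟨hf.1.fderiv_right (by simp), fun n => ?_⟩
    obtain ⟨k, C, h⟩ := hf.2 (n+1)
    exact ⟨k, C, fun x => by rw [norm_iteratedFDeriv_fderiv]; exact h x⟩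
  exact (ContinuousLinearMap.apply ℝ F v).hasTemperateGrowth.comp h

lemma fderiv_net (σ : ℝ → ℝ) (hσ : σ.HasTemperateGrowth) (d0 n : ℕ) (x : Fin d0 → ℝ)
    (θ v : Param d0 n → ℝ) :
    fderiv ℝ (fun θ' => net σ d0 n θ' x) θ v =
      (Real.sqrt n)⁻¹ * ∑ i, fderiv ℝ (fun η => net σ d0 1 η x) (res d0 n i θ) (res d0 n i v) := by
  have hd : ∀ η, HasFDerivAt (fun η => net σ d0 1 η x) (fderiv ℝ (fun η => net σ d0 1 η x) η) η :=
    fun η => ((net_temperate σ hσ d0 1 x).1.differentiable (by simp) η).hasFDerivAt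
  have : HasFDerivAt (fun θ' => net σ d0 n θ' x) ((Real.sqrt n)⁻¹ • ∑ i,
      (fderiv ℝ (fun η => net σ d0 1 η x) (res d0 n i θ)).comp (res d0 n i)) θ := by
    simp_rw [net_eq σ d0 n x]
    exact (HasFDerivAt.fun_sum fun i _ => (hd _).comp θ (res d0 n i).hasFDerivAt).const_mul _
  rw [this.fderiv]
  simp

lemma fderiv2_net (σ : ℝ → ℝ) (hσ : σ.HasTemperateGrowth) (d0 n : ℕ) (x : Fin d0 → ℝ)
    (θ v w : Param d0 n → ℝ) :
    iteratedFDeriv ℝ 2 (fun θ' => net σ d0 n θ' x) θ ![v, w] =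
      (Real.sqrt n)⁻¹ * ∑ i, fderiv ℝ (fun η' => fderiv ℝ (fun η => net σ d0 1 η x) η'
        (res d0 n i w)) (res d0 n i θ) (res d0 n i v) := by
  have hD : DifferentiableAt ℝ (fderiv ℝ (fun θ' => net σ d0 n θ' x)) θ :=
    (((net_temperate σ hσ d0 n x).1.fderiv_right (m := ((⊤ : ℕ∞) : WithTop ℕ∞)) (by simp)).differentiable (by simp) θ)
  have e : fderiv ℝ (fun θ'' => fderiv ℝ (fun θ' => net σ d0 n θ' x) θ'' w) θ v
      = iteratedFDeriv ℝ 2 (fun θ' => net σ d0 n θ' x) θ ![v, w] := by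
    rw [iteratedFDeriv_two_apply, fderiv_clm_apply hD (by fun_prop)]
    simp
  rw [← e]
  have hd : ∀ w' η, HasFDerivAt (fun η' => fderiv ℝ (fun η => net σ d0 1 η x) η' w')
      (fderiv ℝ (fun η' => fderiv ℝ (fun η => net σ d0 1 η x) η' w') η) η :=
    fun w' η => ((fderiv_temperate (net_temperate σ hσ d0 1 x) w').1.differentiable
      (by simp) η).hasFDerivAt
  have : HasFDerivAt (fun θ'' => fderiv ℝ (fun θ' => net σ d0 n θ' x) θ'' w)
      ((Real.sqrt n)⁻¹ • ∑ i,
      (fderiv ℝ (fun η' => fderiv ℝ (fun η => net σ d0 1 η x) η' (res d0 n i w))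
        (res d0 n i θ)).comp (res d0 n i)) θ := by
    simp_rw [fderiv_net σ hσ d0 n x]
    exact (HasFDerivAt.fun_sum fun i _ => (hd _ _).comp θ (res d0 n i).hasFDerivAt).const_mul _
  rw [this.fderiv]
  simp

/-- single-neuron contraction -/
noncomputable def H1 (σ : ℝ → ℝ) (d0 : ℕ) (x₁ x₂ x₃ : Fin d0 → ℝ) (η : Param d0 1 → ℝ) : ℝ :=
  ∑ p, ∑ q, fderiv ℝ (fun η'' => fderiv ℝ (fun η' => net σ d0 1 η' x₁) η''
      (Pi.single q 1)) η (Pi.single p 1) *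
    fderiv ℝ (fun η' => net σ d0 1 η' x₂) η (Pi.single p 1) *
    fderiv ℝ (fun η' => net σ d0 1 η' x₃) η (Pi.single q 1)

lemma H1_temperate (σ : ℝ → ℝ) (hσ : σ.HasTemperateGrowth) (d0 : ℕ) (x₁ x₂ x₃ : Fin d0 → ℝ) :
    (H1 σ d0 x₁ x₂ x₃).HasTemperateGrowth := by
  unfold H1
  have h := fun x => net_temperate σ hσ d0 1 x
  exact .sum fun p _ => .sum fun q _ =>
    ((fderiv_temperate (fderiv_temperate (h _) _) _).mul (fderiv_temperate (h _) _)).mul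
      (fderiv_temperate (h _) _)

lemma fderiv_net_single (σ : ℝ → ℝ) (hσ : σ.HasTemperateGrowth) (d0 n : ℕ) (x : Fin d0 → ℝ)
    (θ : Param d0 n → ℝ) (k : Fin n) (p : Param d0 1) :
    fderiv ℝ (fun θ' => net σ d0 n θ' x) θ (Pi.single (blk d0 n k p) 1) =
      (Real.sqrt n)⁻¹ * fderiv ℝ (fun η => net σ d0 1 η x) (res d0 n k θ) (Pi.single p 1) := by
  rw [fderiv_net σ hσ, Finset.sum_eq_single k]
  · rw [res_single, if_pos rfl]
  · intro b _ hb
    rw [res_single, if_neg hb.symm, map_zero]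
  · simp

lemma fderiv2_net_single (σ : ℝ → ℝ) (hσ : σ.HasTemperateGrowth) (d0 n : ℕ) (x : Fin d0 → ℝ)
    (θ : Param d0 n → ℝ) (k l : Fin n) (p q : Param d0 1) :
    iteratedFDeriv ℝ 2 (fun θ' => net σ d0 n θ' x) θ
        ![Pi.single (blk d0 n k p) 1, Pi.single (blk d0 n l q) 1] =
      if l = k then (Real.sqrt n)⁻¹ * fderiv ℝ (fun η' => fderiv ℝ (fun η => net σ d0 1 η x) η'
        (Pi.single q 1)) (res d0 n k θ) (Pi.single p 1) else 0 := by
  rw [fderiv2_net σ hσ, Finset.sum_eq_single k]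
  · rw [res_single, res_single, if_pos rfl]
    split_ifs with h
    · rfl
    · simp
  · intro b _ hb
    rw [res_single d0 n b k, if_neg hb.symm, map_zero]
  · simp

lemma integrand_eq (σ : ℝ → ℝ) (hσ : σ.HasTemperateGrowth) (d0 n : ℕ) (x₁ x₂ x₃ x₄ : Fin d0 → ℝ)
    (θ : Param d0 n → ℝ) :
    (∑ μ : Param d0 n, ∑ ν : Param d0 n,
      iteratedFDeriv ℝ 2 (fun θ' => net σ d0 n θ' x₁) θ ![Pi.single μ 1, Pi.single ν 1] *
        fderiv ℝ (fun θ' => net σ d0 n θ' x₂) θ (Pi.single μ 1) *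
        fderiv ℝ (fun θ' => net σ d0 n θ' x₃) θ (Pi.single ν 1) *
        net σ d0 n θ x₄) =
    ∑ k, ∑ m, ((n : ℝ)⁻¹) ^ 2 *
      (H1 σ d0 x₁ x₂ x₃ (res d0 n k θ) * net σ d0 1 (res d0 n m θ) x₄) := by
  have hc : ((n : ℝ)⁻¹) ^ 2 = (Real.sqrt n)⁻¹ ^ 4 := by
    rw [← Real.sqrt_inv, show 4 = 2 * 2 from rfl, pow_mul, Real.sq_sqrt (by positivity)]
  have hre : ∀ g : Param d0 n → ℝ, ∑ μ, g μ = ∑ k, ∑ p, g (blk d0 n k p) := fun g => by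
    rw [← (blkEquiv d0 n).sum_comp, Fintype.sum_prod_type]; rfl
  rw [hre]
  refine Finset.sum_congr rfl fun k _ => ?_
  rw [net_eq σ d0 n x₄, ← Finset.mul_sum, ← Finset.mul_sum, hc, H1]
  generalize ∑ i, net σ d0 1 (res d0 n i θ) x₄ = S
  rw [Finset.sum_mul, Finset.mul_sum]
  refine Finset.sum_congr rfl fun p _ => ?_
  rw [hre, Finset.sum_eq_single k]
  · rw [Finset.sum_mul, Finset.mul_sum]
    refine Finset.sum_congr rfl fun q _ => ?_
    rw [fderiv2_net_single σ hσ, fderiv_net_single σ hσ, fderiv_net_single σ hσ, if_pos rfl]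
    ring
  · intro l _ hl
    refine Finset.sum_eq_zero fun q _ => ?_
    rw [fderiv2_net_single σ hσ, if_neg hl]
    simp
  · simp

/-- sign flip of the `k`-th readout weight -/
def flip (d0 n : ℕ) (k : Fin n) (θ : Param d0 n → ℝ) : Param d0 n → ℝ :=
  fun μ => if μ = .inr k then - θ μ else θ μ

lemma flip_mp (d0 n : ℕ) (k : Fin n) :
    MeasurePreserving (flip d0 n k) (gaussParam d0 n) (gaussParam d0 n) := by
  refine measurePreserving_pi (f := fun (μ : Param d0 n) (t : ℝ) => if μ = Sum.inr k then - t else t) _ _ fun μ => ?_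
  split_ifs with h
  · exact ⟨measurable_neg, by simpa using gaussianReal_map_neg (μ := 0) (v := 1)⟩
  · exact .id _

lemma off_diag (σ : ℝ → ℝ) (d0 n : ℕ) (x₄ : Fin d0 → ℝ)
    (k m : Fin n) (hkm : k ≠ m) (G : (Param d0 1 → ℝ) → ℝ) :
    ∫ θ, G (res d0 n k θ) * net σ d0 1 (res d0 n m θ) x₄ ∂(gaussParam d0 n) = 0 := by
  have hinv : Function.Involutive (flip d0 n m) := by
    intro θ; ext μ; by_cases h : μ = .inr m <;> simp [flip, h]
  have hme : MeasurableEmbedding (flip d0 n m) :=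
    (MeasurableEquiv.mk hinv.toPerm (flip_mp d0 n m).measurable
      (flip_mp d0 n m).measurable).measurableEmbedding
  have h := (flip_mp d0 n m).integral_comp hme
    (fun θ => G (res d0 n k θ) * net σ d0 1 (res d0 n m θ) x₄)
  have h1 : ∀ θ, res d0 n k (flip d0 n m θ) = res d0 n k θ := by
    intro θ; ext (p | p) <;> simp [res_apply, flip, blk, hkm]
  have h2 : ∀ θ, net σ d0 1 (res d0 n m (flip d0 n m θ)) x₄ = - net σ d0 1 (res d0 n m θ) x₄ := by
    intro θ; simp [net, res_apply, flip, blk]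
  simp only [h1, h2, mul_neg, integral_neg] at h
  linarith

/-- the correlation function appearing in `E_θ[dΘ/dt]` for a
one-hidden-layer network with smooth activation, all of whose derivatives are polynomially
bounded, is `O(1/n)`. -/
theorem one_hidden_layer_dNTK_correlator (σ : ℝ → ℝ) (hσs : ContDiff ℝ (⊤ : ℕ∞) σ)
    (hσp : ∀ m : ℕ, ∃ C : ℝ, ∃ r : ℕ, ∀ t : ℝ, |iteratedDeriv m σ t| ≤ C * (1 + |t|) ^ r)
    (d0 : ℕ) (hd0 : 0 < d0) (x₁ x₂ x₃ x₄ : Fin d0 → ℝ) :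
    ∃ K : ℝ, ∀ n : ℕ, 1 ≤ n →
      |corrDTheta σ d0 n x₁ x₂ x₃ x₄| ≤ K / (n : ℝ) := by
  have hσ : σ.HasTemperateGrowth := by
    refine ⟨hσs, fun m => ?_⟩
    obtain ⟨C, r, h⟩ := hσp m
    refine ⟨r, C, fun t => ?_⟩
    rw [norm_iteratedFDeriv_eq_norm_iteratedDeriv]
    exact h t
  refine ⟨|∫ η, H1 σ d0 x₁ x₂ x₃ η * net σ d0 1 η x₄ ∂(gaussParam d0 1)|, fun n hn => ?_⟩
  have hn' : (n : ℝ) ≠ 0 := by positivity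
  have hT : ∀ k m : Fin n, Integrable (fun θ => ((n : ℝ)⁻¹) ^ 2 *
      (H1 σ d0 x₁ x₂ x₃ (res d0 n k θ) * net σ d0 1 (res d0 n m θ) x₄)) (gaussParam d0 n) :=
    fun k m => (temperate_integrable d0 n
      (((H1_temperate σ hσ d0 x₁ x₂ x₃).comp (res d0 n k).hasTemperateGrowth).mul
      ((net_temperate σ hσ d0 1 x₄).comp (res d0 n m).hasTemperateGrowth))).const_mul _
  have hdiag : ∀ k : Fin n, ∫ θ, H1 σ d0 x₁ x₂ x₃ (res d0 n k θ) *
      net σ d0 1 (res d0 n k θ) x₄ ∂(gaussParam d0 n) =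
      ∫ η, H1 σ d0 x₁ x₂ x₃ η * net σ d0 1 η x₄ ∂(gaussParam d0 1) := by
    intro k
    rw [← (res_mp d0 n k).map_eq, integral_map (res_mp d0 n k).measurable.aemeasurable]
    exact ((H1_temperate σ hσ d0 x₁ x₂ x₃).1.continuous.mul
      (net_temperate σ hσ d0 1 x₄).1.continuous).aestronglyMeasurable
  have key : corrDTheta σ d0 n x₁ x₂ x₃ x₄ =
      (∫ η, H1 σ d0 x₁ x₂ x₃ η * net σ d0 1 η x₄ ∂(gaussParam d0 1)) / n := by
    unfold corrDTheta
    simp_rw [integrand_eq σ hσ]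
    rw [integral_finsetSum _ fun k _ => integrable_finsetSum _ fun m _ => hT k m]
    have : ∀ k : Fin n, ∫ θ, ∑ m, ((n : ℝ)⁻¹) ^ 2 *
        (H1 σ d0 x₁ x₂ x₃ (res d0 n k θ) * net σ d0 1 (res d0 n m θ) x₄) ∂(gaussParam d0 n) =
        ((n : ℝ)⁻¹) ^ 2 *
        ∫ η, H1 σ d0 x₁ x₂ x₃ η * net σ d0 1 η x₄ ∂(gaussParam d0 1) := by
      intro k
      rw [integral_finsetSum _ fun m _ => hT k m, Finset.sum_eq_single k]
      · rw [integral_const_mul, hdiag]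
      · intro m _ hm
        rw [integral_const_mul, off_diag σ d0 n x₄ k m hm.symm, mul_zero]
      · simp
    simp_rw [this]
    simp
    field_simp
  rw [key, abs_div, Nat.abs_cast]

end OneHiddenLayer
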